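/- arXiv:2410.16761 — 9 statements merged into one kernel-verified Lean document; each statement's English description precedes it below -/
import Mathlib

section
/- Let B be a group with operators in a set A. Then the action of A on B is weakly s-unital if and only if for every nonempty subset S of B the equality ⟨S⟩ = [S] holds. -/
/-- A subgroup `C` of a group `B` with operators in `A` (acting by group
endomorphisms `act a`) is *stable* if it is closed under the action of `A`. -/
def IsStableSub {A B : Type*} [Group B] (act : A → B →* B) (C : Subgroup B) : Prop :=
  ∀ a : A, ∀ c ∈ C, act a c ∈ C

/-- The smallest stable subgroup `⟨S⟩` of `B` containing the set `S`. -/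
def stableClosure {A B : Type*} [Group B] (act : A → B →* B) (S : Set B) : Subgroup B :=
  sInf {C : Subgroup B | IsStableSub act C ∧ S ⊆ C}

/-- `opSetM act S n` is the set `Aⁿ S` of elements
`a₁ (a₂ (⋯ (aₙ s) ⋯))` with `a₁, …, aₙ ∈ A` and `s ∈ S` (and `A⁰ S = S`). -/
def opSetM {A B : Type*} [Group B] (act : A → B →* B) (S : Set B) : ℕ → Set B
  | 0 => S
  | n + 1 => {x | ∃ a : A, ∃ s ∈ opSetM act S n, x = act a s}

/-- `[S]` : the subgroup of `B` generated by the union of the sets `Aⁿ S`, `n ≥ 1`. -/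
def bracketM {A B : Type*} [Group B] (act : A → B →* B) (S : Set B) : Subgroup B :=
  Subgroup.closure (⋃ n : ℕ, opSetM act S (n + 1))

theorem opSetM_mono_aux {A B : Type*} [Group B] (act : A → B →* B) {S T : Set B} (h : S ⊆ T)
    (n : ℕ) : opSetM act S n ⊆ opSetM act T n := by
  induction n with
  | zero => exact h
  | succ n ih =>
    rintro x ⟨a, s, hs, rfl⟩
    exact ⟨a, s, ih hs, rfl⟩

theorem bracketM_stable_aux {A B : Type*} [Group B] (act : A → B →* B) (S : Set B) :
    IsStableSub act (bracketM act S) := by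
  intro a c hc
  have h : bracketM act S ≤ (bracketM act S).comap (act a) := by
    refine (Subgroup.closure_le _).2 ?_
    intro x hx
    obtain ⟨n, hn⟩ := Set.mem_iUnion.1 hx
    exact Subgroup.subset_closure (Set.mem_iUnion.2 ⟨n + 1, a, x, hn, rfl⟩)
  exact h hc

theorem bracketM_le_aux {A B : Type*} [Group B] (act : A → B →* B) (S : Set B) :
    bracketM act S ≤ stableClosure act S := by
  refine le_sInf ?_
  rintro C ⟨hC, hS⟩
  have h : ∀ n, opSetM act S n ⊆ C := by
    intro n
    induction n with
    | zero => exact hS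
    | succ n ih =>
      rintro x ⟨a, s, hs, rfl⟩
      exact hC a s (ih hs)
  exact (Subgroup.closure_le _).2 (Set.iUnion_subset fun n => h (n + 1))

/-- Let `B` be a group with operators in a set `A`.  Then the
action of `A` on `B` is weakly s-unital (i.e. `b ∈ [{b}]` for every `b ∈ B`) if
and only if `⟨S⟩ = [S]` for every nonempty subset `S` of `B`. -/
theorem stmt6 {A B : Type*} [Group B] (act : A → B →* B) :
    (∀ b : B, b ∈ bracketM act {b}) ↔
      ∀ S : Set B, S.Nonempty → stableClosure act S = bracketM act S := by
  constructor
  · intro h S _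
    refine le_antisymm (sInf_le ⟨bracketM_stable_aux act S, ?_⟩) (bracketM_le_aux act S)
    intro b hb
    have hm : bracketM act {b} ≤ bracketM act S :=
      Subgroup.closure_mono (Set.iUnion_mono fun n =>
        opSetM_mono_aux act (Set.singleton_subset_iff.2 hb) (n + 1))
    exact hm (h b)
  · intro h b
    rw [← h {b} (Set.singleton_nonempty b)]
    exact Subgroup.mem_sInf.2 fun C hC => hC.2 rfl
end

section
/- Let B be an abelian group and let σ_B and δ_B be additive endomorphisms of B. Then for all j, k, n ∈ ℕ the Vandermonde identity ∑_{i ∈ ℕ} π_i^k ∘ π_{j−i}^n = π_j^{k+n} holds as an equality of additive maps B → B (the sum is finite, since π_i^k = 0 for i > k and π_{j−i}^n = 0 for j − i > n, with the convention that terms with j − i < 0 are zero). -/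
/-- `words m k` : the words of length `m` in the two letters `σ` (encoded `true`)
and `δ` (encoded `false`) containing exactly `k` occurrences of `σ`. -/
def words (m k : ℕ) : Finset (Fin m → Bool) :=
  Finset.univ.filter fun w => (Finset.univ.filter fun t => w t = true).card = k

/-- Apply a word in the letters `σ`, `δ` to `x`, i.e. the composition of the
corresponding maps applied to `x`. -/
def wordApply {X : Type*} (σ δ : X → X) {m : ℕ} (w : Fin m → Bool) (x : X) : X :=
  (List.ofFn fun t => if w t then σ else δ).foldr (fun f y => f y) x

/-- `piFun σ δ i j` is the map `π_j^i : B → B`, the sum of all `binom(i,j)`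
compositions of `j` instances of `σ` and `i - j` instances of `δ`
(in particular it is `0` for `j > i` and the identity for `i = j = 0`). -/
def piFun {B : Type*} [AddCommMonoid B] (σ δ : B → B) (i j : ℕ) (b : B) : B :=
  ∑ w ∈ words i j, wordApply σ δ w b

lemma piFun_sum {B : Type*} [AddCommMonoid B] (σ δ : B → B) (i j : ℕ) (b : B) :
    piFun σ δ i j b = ∑ w : Fin i → Bool,
      if (Finset.univ.filter fun t => w t = true).card = j then wordApply σ δ w b else 0 := by
  simp only [piFun, words, Finset.sum_filter]

lemma wordApply_cons {X : Type*} (σ δ : X → X) {m : ℕ} (a : Bool) (w : Fin m → Bool) (x : X) :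
    wordApply σ δ (Fin.cons a w : Fin (m + 1) → Bool) x
      = (if a then σ else δ) (wordApply σ δ w x) := by
  simp [wordApply, List.ofFn_succ]

lemma card_cons {m : ℕ} (a : Bool) (w : Fin m → Bool) :
    (Finset.univ.filter fun t => (Fin.cons a w : Fin (m + 1) → Bool) t = true).card
      = (Finset.univ.filter fun t => w t = true).card + if a then 1 else 0 := by
  rw [Fin.card_filter_univ_succ]
  cases a <;> simp

lemma piFun_step {B : Type*} [AddCommGroup B] (σ δ : AddMonoid.End B) (m j : ℕ) (b : B) :
    piFun ⇑σ ⇑δ (m + 1) j b =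
      (if j = 0 then 0 else σ (piFun ⇑σ ⇑δ m (j - 1) b)) + δ (piFun ⇑σ ⇑δ m j b) := by
  rw [piFun_sum, ← (Fin.consEquiv (fun _ : Fin (m + 1) => Bool)).sum_comp,
    Fintype.sum_prod_type, Fintype.sum_bool]
  have hc : ∀ (a : Bool) (w : Fin m → Bool),
      (Fin.consEquiv (fun _ : Fin (m + 1) => Bool)) (a, w) = (Fin.cons a w : Fin (m + 1) → Bool) :=
    fun _ _ => rfl
  simp only [hc, wordApply_cons, card_cons]
  congr 1
  · rcases j with _ | j
    · simp
    · simp [piFun_sum, map_sum, apply_ite]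
  · simp [piFun_sum, map_sum, apply_ite]

open Polynomial in
lemma piFun_coeff {B : Type*} [AddCommGroup B] (σ δ : AddMonoid.End B) (m j : ℕ) (b : B) :
    piFun ⇑σ ⇑δ m j b = ((C σ * X + C δ) ^ m).coeff j b := by
  induction m generalizing j with
  | zero =>
    rw [piFun_sum, pow_zero, coeff_one]
    rcases j with _ | j <;> simp [wordApply]
  | succ m ih =>
    have := piFun_step σ δ m j b
    rw [this, pow_succ', add_mul, coeff_add, mul_assoc, coeff_C_mul, coeff_C_mul, ih, ih]
    rcases j with _ | j
    · simp
    · simp [coeff_X_mul]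
      rfl

lemma vand_aux {B : Type*} [AddCommGroup B] (σ δ : AddMonoid.End B) (j k n : ℕ) (b : B) :
    ∑ i ∈ Finset.range (j + 1), piFun ⇑σ ⇑δ k i (piFun ⇑σ ⇑δ n (j - i) b) =
      piFun ⇑σ ⇑δ (k + n) j b := by
  rw [piFun_coeff σ δ (k + n), pow_add, Polynomial.coeff_mul,
    Finset.Nat.sum_antidiagonal_eq_sum_range_succ_mk]
  refine Eq.trans ?_ (AddMonoidHom.finsetSum_apply _ _ _).symm
  refine Finset.sum_congr rfl fun i _ => ?_
  rw [piFun_coeff σ δ k, piFun_coeff σ δ n]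
  rfl

/-- Vandermonde's identity: for additive endomorphisms `σ`, `δ` of
an abelian group `B` and all `j k n : ℕ`,
`∑_{i} π_i^k ∘ π_{j-i}^n = π_j^{k+n}` (only the terms with `i ≤ j` can be
nonzero, so the sum is taken over `0 ≤ i ≤ j`; terms with `i > k` or
`j - i > n` vanish since the corresponding `π` maps are zero). -/
theorem stmt7 {B : Type*} [AddCommGroup B] (σ δ : B →+ B) (j k n : ℕ) (b : B) :
    ∑ i ∈ Finset.range (j + 1), piFun ⇑σ ⇑δ k i (piFun ⇑σ ⇑δ n (j - i) b) =
      piFun ⇑σ ⇑δ (k + n) j b := by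
  exact vand_aux σ δ j k n b
end

section
/- Let B be an abelian group with operators in a set A, let σ_A, δ_A : A → A be maps, and let σ_B, δ_B be additive endomorphisms of B. Suppose that σ_B is σ_A-twisted and that δ_B is a δ_A-twisted σ_A-derivation. Then for all a ∈ A, b ∈ B and j, m, n ∈ ℕ the identity ∑_{i ∈ ℕ} π_i^m(a · π_{j−i}^n(b)) = ∑_{i ∈ ℕ} ∑_{w ∈ W_{m,i}} w_A(a) · π_j^{i+n}(b) holds in B, where W_{m,i} is the set of words of length m in the two letters σ and δ containing exactly i occurrences of σ, w_A(a) ∈ A is obtained by applying to a the corresponding composition of σ_A and δ_A, terms with j − i < 0 are zero, and both sums are finite. -/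
def cnt9 {m : ℕ} (w : Fin m → Bool) : ℕ := (Finset.univ.filter fun t => w t = true).card

theorem cnt9_cons {m : ℕ} (c : Bool) (w : Fin m → Bool) :
    cnt9 (Fin.cons c w : Fin (m+1) → Bool) = (if c then 1 else 0) + cnt9 w := by
  unfold cnt9
  rw [Fin.card_filter_univ_succ]
  cases c <;> simp [add_comm]

theorem wordApply_cons9 {X : Type*} (σ δ : X → X) {m : ℕ} (c : Bool) (w : Fin m → Bool) (x : X) :
    wordApply σ δ (Fin.cons c w : Fin (m+1) → Bool) x = (if c then σ else δ) (wordApply σ δ w x) := by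
  simp [wordApply, List.ofFn_succ]

theorem sum_cons9 {M : Type*} [AddCommMonoid M] {m : ℕ} (f : (Fin (m+1) → Bool) → M) :
    ∑ w, f w = ∑ w : Fin m → Bool, f (Fin.cons true w) + ∑ w : Fin m → Bool, f (Fin.cons false w) := by
  rw [← (Fin.consEquiv (fun _ : Fin (m+1) => Bool)).sum_comp, Fintype.sum_prod_type]
  simp [Fin.consEquiv]

theorem sum_words9 {M : Type*} [AddCommMonoid M] {m k : ℕ} (f : (Fin m → Bool) → M) :
    ∑ w ∈ words m k, f w = ∑ w, if cnt9 w = k then f w else 0 := by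
  rw [words, Finset.sum_filter]; rfl

theorem piFun_zero9 {B : Type*} [AddCommGroup B] (σ δ : B →+ B) (k : ℕ) (b : B) :
    piFun σ δ 0 k b = if k = 0 then b else 0 := by
  simp only [eq_comm (a := k)]
  rw [piFun, sum_words9]
  simp [cnt9, wordApply]

theorem piFun_succ_zero9 {B : Type*} [AddCommGroup B] (σ δ : B →+ B) (m : ℕ) (b : B) :
    piFun σ δ (m+1) 0 b = δ (piFun σ δ m 0 b) := by
  simp only [piFun, sum_words9, sum_cons9, cnt9_cons, wordApply_cons9, map_sum]
  simp [apply_ite]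

theorem piFun_succ_succ9 {B : Type*} [AddCommGroup B] (σ δ : B →+ B) (m k : ℕ) (b : B) :
    piFun σ δ (m+1) (k+1) b = σ (piFun σ δ m k b) + δ (piFun σ δ m (k+1) b) := by
  simp only [piFun, sum_words9, sum_cons9, cnt9_cons, wordApply_cons9, map_sum]
  simp [apply_ite, add_comm 1]

theorem rhs9 {M : Type*} [AddCommMonoid M] {m : ℕ} (f : ℕ → (Fin m → Bool) → M) :
    ∑ i ∈ Finset.range (m + 1), ∑ w ∈ words m i, f i w = ∑ w, f (cnt9 w) w := by
  simp only [sum_words9]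
  rw [Finset.sum_comm]
  refine Finset.sum_congr rfl fun w _ => ?_
  have : cnt9 w < m + 1 := by
    have := Finset.card_le_univ (Finset.univ.filter fun t => w t = true)
    simp only [Fintype.card_fin] at this
    unfold cnt9; omega
  simp [this]

theorem main9 {A B : Type*} [AddCommGroup B] (act : A → B →+ B)
    (σA δA : A → A) (σB δB : B →+ B)
    (hσ : ∀ (a : A) (b : B), σB (act a b) = act (σA a) (σB b))
    (hδ : ∀ (a : A) (b : B), δB (act a b) = act (σA a) (δB b) + act (δA a) b)
    (a : A) (b : B) (m n j : ℕ) :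
    ∑ i ∈ Finset.range (j + 1), piFun ⇑σB ⇑δB m i (act a (piFun ⇑σB ⇑δB n (j - i) b)) =
      ∑ w : Fin m → Bool, act (wordApply σA δA w a) (piFun ⇑σB ⇑δB (cnt9 w + n) j b) := by
  induction m generalizing j with
  | zero => simp [piFun_zero9, cnt9, wordApply]
  | succ m ih =>
    have e : ∀ x : ℕ, 1 + x + n = x + n + 1 := fun x => by omega
    cases j with
    | zero =>
      have h := congrArg δB (ih 0)
      simp only [map_sum] at h
      simp only [piFun_succ_zero9, sum_cons9, cnt9_cons, wordApply_cons9, zero_add,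
        Finset.sum_range_one, hδ, Finset.sum_add_distrib] at h ⊢
      simpa [e, piFun_succ_zero9] using h
    | succ j =>
      have h1 := congrArg σB (ih j)
      have h2 := congrArg δB (ih (j+1))
      rw [Finset.sum_range_succ'] at h2 ⊢
      simp only [piFun_succ_zero9, piFun_succ_succ9, Finset.sum_add_distrib, Nat.add_sub_add_right]
      simp only [map_sum, map_add, Nat.add_sub_add_right] at h1 h2
      rw [h1, add_assoc, h2, sum_cons9]
      simp [cnt9_cons, wordApply_cons9, e, piFun_succ_succ9, hσ, hδ, Finset.sum_add_distrib, ← add_assoc]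

/-- Let `B` be an abelian group with operators in a set `A`, let
`σA δA : A → A` be maps and `σB δB` additive endomorphisms of `B` such that `σB`
is `σA`-twisted and `δB` is a `δA`-twisted `σA`-derivation.  Then for all
`a ∈ A`, `b ∈ B` and `j m n : ℕ`:
`∑_{i} π_i^m (a • π_{j-i}^n(b)) = ∑_i ∑_{w ∈ W_{m,i}} w_A(a) • π_j^{i+n}(b)`
(on the left only terms with `i ≤ j` can be nonzero, so the sum is over
`0 ≤ i ≤ j`; on the right only terms with `i ≤ m` occur). -/
theorem stmt9 {A B : Type*} [AddCommGroup B] (act : A → B →+ B)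
    (σA δA : A → A) (σB δB : B →+ B)
    (hσ : ∀ (a : A) (b : B), σB (act a b) = act (σA a) (σB b))
    (hδ : ∀ (a : A) (b : B), δB (act a b) = act (σA a) (δB b) + act (δA a) b)
    (a : A) (b : B) (j m n : ℕ) :
    ∑ i ∈ Finset.range (j + 1), piFun ⇑σB ⇑δB m i (act a (piFun ⇑σB ⇑δB n (j - i) b)) =
      ∑ i ∈ Finset.range (m + 1), ∑ w ∈ words m i,
        act (wordApply σA δA w a) (piFun ⇑σB ⇑δB (i + n) j b) := by
  rw [rhs9 (fun i w => act (wordApply σA δA w a) (piFun ⇑σB ⇑δB (i + n) j b))]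
  exact main9 act σA δA σB δB hσ hδ a b m n j
end

section
/- Let B be an abelian group with operators in a set A and let S be a nonempty subset of B. Then ⟨S⟩ = ∑_{n ∈ ℕ} ℤ(Aⁿ S) and [S] = ∑_{n ≥ 1} ℤ(Aⁿ S). Moreover, the action of A on B is weakly s-unital if and only if for every nonempty subset S of B the equality ⟨S⟩ = ∑_{n ≥ 1} ℤ(Aⁿ S) holds. -/
/-- `opSet act S n` is the set `Aⁿ S` of elements
`a₁ (a₂ (⋯ (aₙ s) ⋯))` with `a₁, …, aₙ ∈ A` and `s ∈ S` (and `A⁰ S = S`). -/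
def opSet {A B : Type*} (act : A → B → B) (S : Set B) : ℕ → Set B
  | 0 => S
  | n + 1 => {x | ∃ a : A, ∃ s ∈ opSet act S n, x = act a s}

/-- A subgroup of an abelian group `B` with operators in `A` is *stable* if it
is closed under the action of `A`. -/
def IsStableAdd {A B : Type*} [AddGroup B] (act : A → B → B) (C : AddSubgroup B) : Prop :=
  ∀ a : A, ∀ b ∈ C, act a b ∈ C

/-- The smallest stable subgroup `⟨S⟩` of `B` containing the set `S`. -/
def stableClosureAdd {A B : Type*} [AddGroup B] (act : A → B → B) (S : Set B) : AddSubgroup B :=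
  sInf {C : AddSubgroup B | IsStableAdd act C ∧ S ⊆ C}

/-- `[S]` : the subgroup of `B` generated by the union of the sets `Aⁿ S`, `n ≥ 1`. -/
def bracketAdd {A B : Type*} [AddGroup B] (act : A → B → B) (S : Set B) : AddSubgroup B :=
  AddSubgroup.closure (⋃ n : ℕ, opSet act S (n + 1))

/-- A group `B` with operators in `A` is *stably Noetherian* if every ascending
chain of stable subgroups of `B` eventually stabilizes. -/
def StablyNoetherianAdd {A B : Type*} [AddGroup B] (act : A → B → B) : Prop :=
  ∀ f : ℕ → AddSubgroup B, (∀ n, IsStableAdd act (f n)) → Monotone f →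
    ∃ N : ℕ, ∀ n : ℕ, N ≤ n → f n = f N

theorem opSet_mono_aux {A B : Type*} (act : A → B → B) {S T : Set B} (h : S ⊆ T) (n : ℕ) :
    opSet act S n ⊆ opSet act T n := by
  induction n with
  | zero => exact h
  | succ n ih =>
    rintro x ⟨a, s, hs, rfl⟩
    exact ⟨a, s, ih hs, rfl⟩

theorem stable_closure_aux {A B : Type*} [AddCommGroup B] (act : A → B → B)
    (hadd : ∀ (a : A) (b₁ b₂ : B), act a (b₁ + b₂) = act a b₁ + act a b₂) (T : Set B)
    (hT : ∀ a, ∀ b ∈ T, act a b ∈ AddSubgroup.closure T) :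
    IsStableAdd act (AddSubgroup.closure T) := by
  intro a
  have : AddSubgroup.closure T ≤
      (AddSubgroup.closure T).comap (AddMonoidHom.mk' (act a) (hadd a)) := by
    rw [AddSubgroup.closure_le]
    intro b hb
    exact hT a b hb
  intro b hb
  exact this hb

theorem stableClosure_aux {A B : Type*} [AddCommGroup B] (act : A → B → B)
    (hadd : ∀ (a : A) (b₁ b₂ : B), act a (b₁ + b₂) = act a b₁ + act a b₂) (S : Set B) :
    stableClosureAdd act S = ⨆ n : ℕ, AddSubgroup.closure (opSet act S n) := by
  apply le_antisymm
  · apply sInf_le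
    rw [← AddSubgroup.closure_iUnion]
    refine ⟨stable_closure_aux act hadd _ ?_, ?_⟩
    · intro a b hb
      obtain ⟨n, hn⟩ := Set.mem_iUnion.1 hb
      exact AddSubgroup.subset_closure (Set.mem_iUnion.2 ⟨n + 1, a, b, hn, rfl⟩)
    · intro b hb
      exact AddSubgroup.subset_closure (Set.mem_iUnion.2 ⟨0, hb⟩)
  · refine le_sInf ?_
    rintro C ⟨hC, hS⟩
    refine iSup_le fun n => ?_
    rw [AddSubgroup.closure_le]
    induction n with
    | zero => exact hS
    | succ n ih =>
      rintro x ⟨a, s, hs, rfl⟩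
      exact hC a s (ih hs)

/-- Let `B` be an abelian group with operators in a set `A` (each
`a ∈ A` acting additively) and let `S` be a nonempty subset of `B`.  Then
`⟨S⟩ = ∑_{n ∈ ℕ} ℤ(Aⁿ S)` and `[S] = ∑_{n ≥ 1} ℤ(Aⁿ S)` (the sum of the
subgroups `ℤ(Aⁿ S)` generated by the sets `Aⁿ S` is their supremum).  Moreover,
the action of `A` on `B` is weakly s-unital if and only if
`⟨S⟩ = ∑_{n ≥ 1} ℤ(Aⁿ S)` for every nonempty subset `S` of `B`. -/
theorem stmt12 {A B : Type*} [AddCommGroup B] (act : A → B → B)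
    (hadd : ∀ (a : A) (b₁ b₂ : B), act a (b₁ + b₂) = act a b₁ + act a b₂) :
    (∀ S : Set B, S.Nonempty →
        stableClosureAdd act S = ⨆ n : ℕ, AddSubgroup.closure (opSet act S n)) ∧
    (∀ S : Set B, S.Nonempty →
        bracketAdd act S = ⨆ n : ℕ, AddSubgroup.closure (opSet act S (n + 1))) ∧
    ((∀ b : B, b ∈ bracketAdd act {b}) ↔
      ∀ S : Set B, S.Nonempty →
        stableClosureAdd act S = ⨆ n : ℕ, AddSubgroup.closure (opSet act S (n + 1))) := by
  have h2 : ∀ S : Set B,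
      bracketAdd act S = ⨆ n : ℕ, AddSubgroup.closure (opSet act S (n + 1)) := fun S =>
    AddSubgroup.closure_iUnion _
  refine ⟨fun S _ => stableClosure_aux act hadd S, fun S _ => h2 S, ?_, ?_⟩
  · intro hw S _
    rw [← h2]
    apply le_antisymm
    · apply sInf_le
      refine ⟨stable_closure_aux act hadd _ ?_, ?_⟩
      · intro a b hb
        obtain ⟨n, hn⟩ := Set.mem_iUnion.1 hb
        exact AddSubgroup.subset_closure (Set.mem_iUnion.2 ⟨n + 1, a, b, hn, rfl⟩)
      · intro b hb
        exact AddSubgroup.closure_mono (Set.iUnion_mono fun n =>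
          opSet_mono_aux act (Set.singleton_subset_iff.2 hb) (n + 1)) (hw b)
    · rw [h2, stableClosure_aux act hadd]
      exact iSup_le fun n => le_iSup (fun n => AddSubgroup.closure (opSet act S n)) (n + 1)
  · intro h b
    rw [h2, ← h {b} ⟨b, rfl⟩]
    exact AddSubgroup.mem_sInf.2 fun C hC => hC.2 rfl
end

section
/- Let B[x;σ_B,δ_B] be an Ore group extension of an abelian group B with operators in a set A with zero element ε. For b ∈ B and i, j, k ∈ ℕ the following hold: (i) β_{i+j}( A^k( (Ax^i)(bx^j) ) ) = ( A^{k+1} σ_B^i(b) ) x^{i+j}, where (Ax^i)(bx^j) denotes the subset { (a x^i)(b x^j) : a ∈ A } of B[x] and A acts on B[x] coefficientwise; (ii) if σ_B^i(b) ∈ [{σ_B^i(b)}], then σ_B^i(b) x^{i+j} ∈ β_{i+j}( ⟨ (Ax^i)(bx^j) ⟩ ), where ⟨T⟩ denotes the smallest A-stable subgroup of the abelian group B[x] (with the coefficientwise A-action) containing T. -/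
/-- The Ore action of a polynomial `α = ∑ aᵢ xⁱ` over the operator set `A` on a
polynomial `β = ∑ bⱼ xʲ` over the abelian group `B` (polynomials are encoded as
finitely supported functions `ℕ →₀ _`), given by
`α β = ∑_{i,j,k} (aᵢ • π_k^i(bⱼ)) x^{k+j}`, where the maps `π_k^i` are built
from `σ` and `δ` (only the terms with `k ≤ i` can be nonzero). -/
noncomputable def oreAct {A B : Type*} [Zero A] [AddCommGroup B] (act : A → B → B) (σ δ : B → B)
    (α : ℕ →₀ A) (β : ℕ →₀ B) : ℕ →₀ B :=
  α.sum fun i a => β.sum fun j b =>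
    ∑ k ∈ Finset.range (i + 1), Finsupp.single (k + j) (act a (piFun σ δ i k b))

/-- The coefficientwise action of the operator set `A` on the polynomial group
`B[x]` (this is the action of `A` via the constant polynomials). -/
noncomputable def coeffAct {A B : Type*} [AddCommGroup B] (act : A → B → B)
    (a : A) (p : ℕ →₀ B) : ℕ →₀ B :=
  p.sum fun n b => Finsupp.single n (act a b)

theorem s13_wordApply_true {X : Type*} (σ δ : X → X) (m : ℕ) (x : X) :
    wordApply σ δ (fun _ : Fin m => true) x = σ^[m] x := by
  unfold wordApply
  simp only [if_true]
  induction m with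
  | zero => simp
  | succ n ih => rw [List.ofFn_succ, List.foldr_cons, ih, Function.iterate_succ_apply']

theorem s13_words (m : ℕ) : words m m = {fun _ => true} := by
  ext w
  simp only [words, Finset.mem_filter, Finset.mem_univ, true_and, Finset.mem_singleton]
  constructor
  · intro h
    have h2 : (Finset.univ.filter fun t => w t = true) = Finset.univ := by
      apply Finset.eq_univ_of_card
      simpa using h
    funext t
    have : t ∈ (Finset.univ.filter fun t => w t = true) := by rw [h2]; simp
    simpa using this
  · rintro rfl
    simp

theorem s13_piFun {B : Type*} [AddCommMonoid B] (σ δ : B → B) (i : ℕ) (b : B) :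
    piFun σ δ i i b = σ^[i] b := by
  rw [piFun, s13_words, Finset.sum_singleton, s13_wordApply_true]

theorem s13_coeffAct {A B : Type*} [AddCommGroup B] (act : A → B → B)
    (h0 : ∀ a, act a 0 = 0) (a : A) (p : ℕ →₀ B) (n : ℕ) :
    coeffAct act a p n = act a (p n) := by
  classical
  unfold coeffAct
  rw [Finsupp.sum_apply, Finsupp.sum]
  simp only [Finsupp.single_apply]
  rw [Finset.sum_ite_eq']
  split_ifs with h
  · rfl
  · rw [Finsupp.notMem_support_iff.1 h, h0]

theorem s13_ore {A B : Type*} [Zero A] [AddCommGroup B] (act : A → B → B)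
    (h0 : ∀ a, act a 0 = 0) (hε : ∀ b : B, act (0 : A) b = 0)
    (σ δ : B →+ B) (b : B) (i j : ℕ) (a : A) :
    oreAct act ⇑σ ⇑δ (Finsupp.single i a) (Finsupp.single j b) (i + j)
      = act a ((⇑σ)^[i] b) := by
  classical
  have hw : ∀ k (w : Fin k → Bool), wordApply σ δ w 0 = 0 := by
    intro k w
    unfold wordApply
    induction k with
    | zero => simp
    | succ n ih =>
      rw [List.ofFn_succ, List.foldr_cons, ih (fun t => w t.succ)]
      split_ifs <;> simp
  have hp : ∀ k, piFun σ δ i k 0 = 0 := by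
    intro k
    unfold piFun
    exact Finset.sum_eq_zero fun w _ => hw _ w
  unfold oreAct
  rw [Finsupp.sum_single_index, Finsupp.sum_single_index, Finsupp.finset_sum_apply]
  · rw [Finset.sum_eq_single i]
    · rw [Finsupp.single_eq_same, s13_piFun]
    · intro k _ hk
      rw [Finsupp.single_apply, if_neg (by omega)]
    · intro h; simp at h
  · simp [hp, h0]
  · simp [hε]

theorem s13_opSet {A B : Type*} [Zero A] [AddCommGroup B] (act : A → B → B)
    (h0 : ∀ a, act a 0 = 0) (hε : ∀ b : B, act (0 : A) b = 0)
    (σ δ : B →+ B) (b : B) (i j k : ℕ) :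
    (fun p : ℕ →₀ B => p (i + j)) '' (opSet (coeffAct act)
          {p : ℕ →₀ B | ∃ a : A,
            p = oreAct act ⇑σ ⇑δ (Finsupp.single i a) (Finsupp.single j b)} k)
      = opSet act {(⇑σ)^[i] b} (k + 1) := by
  induction k with
  | zero =>
    ext c
    constructor
    · rintro ⟨_, ⟨a, rfl⟩, rfl⟩
      exact ⟨a, _, rfl, s13_ore act h0 hε σ δ b i j a⟩
    · rintro ⟨a, _, rfl, rfl⟩
      exact ⟨_, ⟨a, rfl⟩, s13_ore act h0 hε σ δ b i j a⟩
  | succ n ih =>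
    ext c
    constructor
    · rintro ⟨_, ⟨a, p, hp, rfl⟩, rfl⟩
      refine ⟨a, p (i + j), ?_, s13_coeffAct act h0 a p _⟩
      rw [← ih]
      exact ⟨p, hp, rfl⟩
    · rintro ⟨a, s, hs, rfl⟩
      rw [← ih] at hs
      obtain ⟨p, hp, rfl⟩ := hs
      exact ⟨_, ⟨a, p, hp, rfl⟩, s13_coeffAct act h0 a p _⟩

theorem s13_opSet_sub {A B : Type*} [AddGroup B] (act : A → B → B) (S : Set B) (n : ℕ) :
    opSet act S n ⊆ stableClosureAdd act S := by
  intro x hx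
  refine AddSubgroup.mem_sInf.2 ?_
  rintro C ⟨hC, hS⟩
  induction n generalizing x with
  | zero => exact hS hx
  | succ n ih =>
    obtain ⟨a, s, hs, rfl⟩ := hx
    exact hC a s (ih hs)

/-- Let `B[x;σ,δ]` be an Ore group extension of an abelian group
`B` with operators in a set `A` with zero element.  For `b ∈ B` and
`i j k : ℕ`:
(i)  `β_{i+j}( A^k( (A xⁱ)(b xʲ) ) ) = ( A^{k+1} σᶦ(b) ) x^{i+j}`, where
`(A xⁱ)(b xʲ) = { (a xⁱ)(b xʲ) : a ∈ A } ⊆ B[x]` and `A` acts on `B[x]`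
coefficientwise;
(ii) if `σᶦ(b) ∈ [{σᶦ(b)}]`, then
`σᶦ(b) x^{i+j} ∈ β_{i+j}( ⟨ (A xⁱ)(b xʲ) ⟩ )`, where `⟨T⟩` is the smallest
`A`-stable subgroup of `B[x]` containing `T`.
Here `β_n : B[x] → B[x]` is the projection `∑ bᵢ xⁱ ↦ bₙ xⁿ`. -/
theorem stmt13 {A B : Type*} [Zero A] [AddCommGroup B] (act : A → B → B)
    (hadd : ∀ (a : A) (b₁ b₂ : B), act a (b₁ + b₂) = act a b₁ + act a b₂)
    (hε : ∀ b : B, act (0 : A) b = 0)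
    (σ δ : B →+ B) (b : B) (i j k : ℕ) :
    ((fun p : ℕ →₀ B => Finsupp.single (i + j) (p (i + j))) ''
        (opSet (coeffAct act)
          {p : ℕ →₀ B | ∃ a : A,
            p = oreAct act ⇑σ ⇑δ (Finsupp.single i a) (Finsupp.single j b)} k)
      = (fun c : B => (Finsupp.single (i + j) c : ℕ →₀ B)) ''
          (opSet act {(⇑σ)^[i] b} (k + 1))) ∧
    ((⇑σ)^[i] b ∈ bracketAdd act {(⇑σ)^[i] b} →
      (Finsupp.single (i + j) ((⇑σ)^[i] b) : ℕ →₀ B) ∈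
        (fun p : ℕ →₀ B => Finsupp.single (i + j) (p (i + j))) ''
          (stableClosureAdd (coeffAct act)
            {p : ℕ →₀ B | ∃ a : A,
              p = oreAct act ⇑σ ⇑δ (Finsupp.single i a) (Finsupp.single j b)} :
            Set (ℕ →₀ B))) := by
  have h0 : ∀ a, act a 0 = 0 := fun a => by
    have := hadd a 0 0
    simpa using this
  have key := s13_opSet act h0 hε σ δ b i j
  constructor
  · rw [← key k, Set.image_image]
  · intro h
    have hle : bracketAdd act {(⇑σ)^[i] b} ≤
        (stableClosureAdd (coeffAct act)
            {p : ℕ →₀ B | ∃ a : A,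
              p = oreAct act ⇑σ ⇑δ (Finsupp.single i a) (Finsupp.single j b)}).map
          (Finsupp.applyAddHom (i + j)) := by
      refine (AddSubgroup.closure_le _).2 (Set.iUnion_subset fun n => ?_)
      rw [← key n]
      rintro _ ⟨p, hp, rfl⟩
      exact ⟨p, s13_opSet_sub _ _ n hp, rfl⟩
    obtain ⟨p, hp, hpe⟩ := hle h
    refine ⟨p, hp, ?_⟩
    change p (i + j) = _ at hpe
    simp only [hpe]
end

section
/- Let B[x;σ_B,δ_B] be an Ore group extension of an abelian group B with operators in a set A with zero element ε. Suppose that B is stably Noetherian, that the action of A on B is weakly s-unital, and that σ_B is a surjective A-stable additive endomorphism of B. Then B[x;σ_B,δ_B], seen as a group with operators in A[x], is stably Noetherian. -/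
theorem ore_words00 : words 0 0 = Finset.univ := by decide
theorem ore_words10 : words 1 0 = {fun _ => false} := by decide
theorem ore_words11 : words 1 1 = {fun _ => true} := by decide

theorem ore_pi00 {B : Type*} [AddCommMonoid B] (σ δ : B → B) (b : B) : piFun σ δ 0 0 b = b := by
  simp [piFun, ore_words00, wordApply]
theorem ore_pi10 {B : Type*} [AddCommMonoid B] (σ δ : B → B) (b : B) : piFun σ δ 1 0 b = δ b := by
  simp [piFun, ore_words10, wordApply]
theorem ore_pi11 {B : Type*} [AddCommMonoid B] (σ δ : B → B) (b : B) : piFun σ δ 1 1 b = σ b := by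
  simp [piFun, ore_words11, wordApply]

theorem ore_act0 {A B : Type*} [Zero A] [AddCommGroup B] (act : A → B → B)
    (h0 : ∀ a, act a 0 = 0) (hε : ∀ b : B, act (0 : A) b = 0)
    (σ δ : B →+ B) (a : A) (β : ℕ →₀ B) (n : ℕ) :
    oreAct act σ δ (Finsupp.single 0 a) β n = act a (β n) := by
  unfold oreAct
  rw [Finsupp.sum_single_index]
  · simp only [zero_add, Finset.range_one, Finset.sum_singleton, ore_pi00]
    rw [Finsupp.sum_apply, Finsupp.sum]
    simp only [Finsupp.single_apply]
    rw [Finset.sum_ite_eq']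
    split_ifs with h
    · rfl
    · rw [Finsupp.notMem_support_iff.1 h, h0]
  · simp [hε]

theorem ore_act1 {A B : Type*} [Zero A] [AddCommGroup B] (act : A → B → B)
    (h0 : ∀ a, act a 0 = 0) (hε : ∀ b : B, act (0 : A) b = 0)
    (σ δ : B →+ B) (a : A) (β : ℕ →₀ B) (n : ℕ) :
    oreAct act σ δ (Finsupp.single 1 a) β (n+1) = act a (δ (β (n+1))) + act a (σ (β n)) := by
  unfold oreAct
  rw [Finsupp.sum_single_index]
  · simp only [Finset.sum_range_succ, Finset.range_one, Finset.sum_singleton, ore_pi10, ore_pi11,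
      Finset.range_zero, Finset.sum_empty, zero_add]
    rw [Finsupp.sum_apply, Finsupp.sum]
    simp only [Finsupp.single_apply, Finsupp.add_apply, Finset.sum_add_distrib]
    congr 1
    · rw [Finset.sum_ite_eq']
      split_ifs with h
      · rfl
      · rw [Finsupp.notMem_support_iff.1 h, map_zero, h0]
    · have : ∀ x, (1 + x = n + 1) = (x = n) := fun x => by simp; omega
      simp only [this]
      rw [Finset.sum_ite_eq']
      split_ifs with h
      · rfl
      · rw [Finsupp.notMem_support_iff.1 h, map_zero, h0]
  · simp [hε]

/-- Leading coefficients in degree `d`. -/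
def oreLead {B : Type*} [AddCommGroup B] (I : AddSubgroup (ℕ →₀ B)) (d : ℕ) : AddSubgroup B where
  carrier := {b | ∃ β ∈ I, (∀ j, d < j → β j = 0) ∧ β d = b}
  zero_mem' := ⟨0, I.zero_mem, by simp, by simp⟩
  add_mem' := by
    rintro _ _ ⟨β, hβ, h1, rfl⟩ ⟨γ, hγ, h2, rfl⟩
    exact ⟨β + γ, I.add_mem hβ hγ, fun j hj => by simp [h1 j hj, h2 j hj], by simp⟩
  neg_mem' := by
    rintro _ ⟨β, hβ, h1, rfl⟩
    exact ⟨-β, I.neg_mem hβ, fun j hj => by simp [h1 j hj], by simp⟩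

theorem oreLead_mono {B : Type*} [AddCommGroup B] {I J : AddSubgroup (ℕ →₀ B)} (h : I ≤ J)
    (d : ℕ) : oreLead I d ≤ oreLead J d := by
  rintro _ ⟨β, hβ, h1, rfl⟩
  exact ⟨β, h hβ, h1, rfl⟩

theorem oreLead_eq {B : Type*} [AddCommGroup B] {I J : AddSubgroup (ℕ →₀ B)} (h : I ≤ J)
    (hl : ∀ d, oreLead J d ≤ oreLead I d) : J ≤ I := by
  have key : ∀ d : ℕ, ∀ β ∈ J, (∀ j, d ≤ j → β j = 0) → β ∈ I := by
    intro d
    induction d with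
    | zero =>
      intro β _ h0
      have : β = 0 := by ext j; exact h0 j (Nat.zero_le _)
      rw [this]; exact I.zero_mem
    | succ d ih =>
      intro β hβ h0
      obtain ⟨γ, hγ, h1, h2⟩ := hl d ⟨β, hβ, fun j hj => h0 j hj, rfl⟩
      have : β - γ ∈ I := by
        refine ih _ (J.sub_mem hβ (h hγ)) fun j hj => ?_
        rcases hj.eq_or_lt with rfl | hj
        · simp [h2]
        · simp [h1 j hj, h0 j hj]
      simpa using I.add_mem this hγ
  intro β hβ
  refine key (β.support.sup id + 1) β hβ fun j hj => ?_
  by_contra hne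
  have := Finset.le_sup (f := id) (Finsupp.mem_support_iff.2 hne)
  simp only [id] at this
  omega

theorem ore_bracket_le {A B : Type*} [AddCommGroup B] (act : A → B → B) (C : AddSubgroup B)
    (hC : IsStableAdd act C) (b : B) (hb : ∀ a, act a b ∈ C) : bracketAdd act {b} ≤ C := by
  unfold bracketAdd
  rw [AddSubgroup.closure_le]
  intro x hx
  obtain ⟨n, hn⟩ := Set.mem_iUnion.1 hx
  clear hx
  induction n generalizing x with
  | zero =>
    obtain ⟨a, s, hs, rfl⟩ := hn
    have : s = b := hs
    subst this
    exact hb a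
  | succ n ih =>
    obtain ⟨a, s, hs, rfl⟩ := hn
    exact hC a s (ih hs)

/-- Hilbert's basis theorem for Ore group extensions: Let
`B[x;σ,δ]` be an Ore group extension of an abelian group `B` with operators in
a set `A` with zero element (acting as `0`).  If `B` is stably Noetherian, the
action of `A` on `B` is weakly s-unital, and `σ` is a surjective `A`-stable
additive endomorphism of `B`, then `B[x;σ,δ]`, seen as a group with operators
in `A[x]`, is stably Noetherian. -/
theorem stmt14 {A B : Type*} [Zero A] [AddCommGroup B] (act : A → B → B)
    (hadd : ∀ (a : A) (b₁ b₂ : B), act a (b₁ + b₂) = act a b₁ + act a b₂)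
    (hε : ∀ b : B, act (0 : A) b = 0)
    (σ δ : B →+ B)
    (hNoeth : StablyNoetherianAdd act)
    (hwsu : ∀ b : B, b ∈ bracketAdd act {b})
    (hsurj : Function.Surjective ⇑σ)
    (hstable : ∀ (a : A) (b : B), ∃ a' : A, σ (act a b) = act a' (σ b)) :
    StablyNoetherianAdd (fun (α : ℕ →₀ A) (β : ℕ →₀ B) => oreAct act ⇑σ ⇑δ α β) := by
  have h0 : ∀ a, act a 0 = 0 := fun a => by
    have := hadd a 0 0
    simpa using this
  intro f hf hmono
  have hLs : ∀ n d, IsStableAdd act (oreLead (f n) d) := by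
    rintro n d a _ ⟨β, hβ, h1, rfl⟩
    refine ⟨_, hf n (Finsupp.single 0 a) β hβ, fun j hj => ?_, ?_⟩
    · simp only [ore_act0 act h0 hε, h1 j hj, h0]
    · simp only [ore_act0 act h0 hε]
  have hLσ : ∀ n d, ∀ b ∈ oreLead (f n) d, σ b ∈ oreLead (f n) (d+1) := by
    rintro n d _ ⟨β, hβ, h1, rfl⟩
    refine ore_bracket_le act _ (hLs n (d+1)) _ (fun a => ?_) (hwsu _)
    refine ⟨_, hf n (Finsupp.single 1 a) β hβ, fun j hj => ?_, ?_⟩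
    · obtain ⟨j, rfl⟩ : ∃ k, j = k + 1 := ⟨j - 1, by omega⟩
      simp only [ore_act1 act h0 hε, h1 (j+1) (by omega), h1 j (by omega), map_zero, h0, add_zero]
    · simp only [ore_act1 act h0 hε, h1 (d+1) (by omega), map_zero, h0, zero_add]
  have hpow : ∀ (d : ℕ) (a : A) (b : B), ∃ a' : A, σ^[d] (act a b) = act a' (σ^[d] b) := by
    intro d
    induction d with
    | zero => exact fun a b => ⟨a, rfl⟩
    | succ d ih =>
      intro a b
      obtain ⟨a', h⟩ := ih a b
      obtain ⟨a'', h'⟩ := hstable a' (σ^[d] b)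
      exact ⟨a'', by rw [Function.iterate_succ_apply', Function.iterate_succ_apply', h, h']⟩
  let K : ℕ → ℕ → AddSubgroup B := fun n d =>
    { carrier := {b | σ^[d] b ∈ oreLead (f n) d}
      zero_mem' := by
        simp only [Set.mem_setOf_eq, iterate_map_zero]
        exact zero_mem _
      add_mem' := by
        intro a b ha hb
        simp only [Set.mem_setOf_eq, iterate_map_add] at *
        exact add_mem ha hb
      neg_mem' := by
        intro a ha
        simp only [Set.mem_setOf_eq, iterate_map_neg] at *
        exact neg_mem ha }
  have hKm : ∀ n d b, b ∈ K n d ↔ σ^[d] b ∈ oreLead (f n) d := fun _ _ _ => Iff.rfl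
  have hKs : ∀ n d, IsStableAdd act (K n d) := by
    intro n d a b hb
    rw [hKm] at *
    obtain ⟨a', h⟩ := hpow d a b
    rw [h]
    exact hLs n d a' _ hb
  have hK1 : ∀ d, Monotone fun n => K n d := fun d n m hnm b hb =>
    oreLead_mono (hmono hnm) d hb
  have hK2 : ∀ n, Monotone (K n) := fun n => monotone_nat_of_le_succ fun d b hb => by
    rw [hKm] at *
    rw [Function.iterate_succ_apply']
    exact hLσ n d _ hb
  obtain ⟨N, hN⟩ := hNoeth (fun n => K n n) (fun n => hKs n n)
    (fun n m h => (hK1 n h).trans (hK2 m h))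
  choose M hM using fun d => hNoeth (fun n => K n d) (fun n => hKs n d) (hK1 d)
  let R := N + (Finset.range N).sup M
  have hR : ∀ n d, R ≤ n → K n d ≤ K R d := by
    intro n d hn
    by_cases hd : d < N
    · have h1 : M d ≤ R :=
        (Finset.le_sup (f := M) (Finset.mem_range.2 hd)).trans (Nat.le_add_left _ _)
      exact ((hM d n (h1.trans hn)).trans (hM d R h1).symm).le
    · have hd : N ≤ d := not_lt.1 hd
      have hNR : N ≤ R := Nat.le_add_right _ _
      calc K n d ≤ K (max n d) d := hK1 d (le_max_left _ _)
        _ ≤ K (max n d) (max n d) := hK2 _ (le_max_right _ _)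
        _ = K N N := hN _ (hd.trans (le_max_right _ _))
        _ ≤ K R N := hK1 N hNR
        _ ≤ K R d := hK2 R hd
  refine ⟨R, fun n hn => le_antisymm (oreLead_eq (hmono hn) fun d c hc => ?_) (hmono hn)⟩
  obtain ⟨b, rfl⟩ := hsurj.iterate d c
  exact hR n d hn hc
end

section
/- Let B be an abelian group with operators in a set A with zero element ε (so εb = 0 for all b ∈ B), and consider the polynomial group B[x] := B[x; id_B, 0] as a group with operators in A[x], via (∑_i a_i x^i)(∑_j b_j x^j) := ∑_{i,j} (a_i b_j) x^{i+j}. Then B[x] is stably Noetherian if and only if B is stably Noetherian and the action of A on B is weakly s-unital. -/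
/-- the polynomial action -/
noncomputable def pAct {A B : Type*} [Zero A] [AddCommGroup B] (act : A → B → B)
    (α : ℕ →₀ A) (β : ℕ →₀ B) : ℕ →₀ B :=
  α.sum fun i a => β.sum fun j b => Finsupp.single (i + j) (act a b)

/-- polynomials with `i`-th coefficient in `G i` -/
def polySub {B : Type*} [AddCommGroup B] (G : ℕ → AddSubgroup B) : AddSubgroup (ℕ →₀ B) where
  carrier := {p | ∀ i, p i ∈ G i}
  zero_mem' := fun i => (G i).zero_mem
  add_mem' := fun hp hq i => (G i).add_mem (hp i) (hq i)
  neg_mem' := fun hp i => (G i).neg_mem (hp i)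

theorem mem_polySub {B : Type*} [AddCommGroup B] (G : ℕ → AddSubgroup B) (p : ℕ →₀ B) :
    p ∈ polySub G ↔ ∀ i, p i ∈ G i := Iff.rfl

theorem single_mem_polySub {B : Type*} [AddCommGroup B] (G : ℕ → AddSubgroup B) (n : ℕ) (b : B) :
    Finsupp.single n b ∈ polySub G ↔ b ∈ G n := by
  constructor
  · intro h
    simpa using h n
  · intro h i
    by_cases hi : n = i
    · subst hi; simpa using h
    · rw [Finsupp.single_eq_of_ne' hi]; exact (G i).zero_mem

theorem polySub_stable {A B : Type*} [Zero A] [AddCommGroup B] (act : A → B → B)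
    (G : ℕ → AddSubgroup B) (hG : ∀ i j a, ∀ b ∈ G j, act a b ∈ G (i + j)) :
    IsStableAdd (pAct act) (polySub G) := by
  intro α β hβ
  unfold pAct Finsupp.sum
  refine AddSubgroup.sum_mem _ fun i _ => AddSubgroup.sum_mem _ fun j _ => ?_
  rw [single_mem_polySub]
  exact hG _ _ _ _ (hβ j)

theorem act_zero' {A B : Type*} [AddCommGroup B] (act : A → B → B)
    (hadd : ∀ (a : A) (b₁ b₂ : B), act a (b₁ + b₂) = act a b₁ + act a b₂) (a : A) :
    act a 0 = 0 := by
  have := hadd a 0 0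
  simpa using this

theorem act_neg' {A B : Type*} [AddCommGroup B] (act : A → B → B)
    (hadd : ∀ (a : A) (b₁ b₂ : B), act a (b₁ + b₂) = act a b₁ + act a b₂) (a : A) (b : B) :
    act a (-b) = - act a b := by
  have := hadd a (-b) b
  rw [neg_add_cancel, act_zero' act hadd] at this
  exact eq_neg_of_add_eq_zero_left this.symm

theorem pAct_single_apply {A B : Type*} [Zero A] [AddCommGroup B] (act : A → B → B)
    (hadd : ∀ (a : A) (b₁ b₂ : B), act a (b₁ + b₂) = act a b₁ + act a b₂)
    (hε : ∀ b : B, act (0 : A) b = 0) (i : ℕ) (a : A) (β : ℕ →₀ B) (m : ℕ) :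
    pAct act (Finsupp.single i a) β (i + m) = act a (β m) := by
  unfold pAct
  rw [Finsupp.sum_single_index (by simp [hε, Finsupp.sum]), Finsupp.sum, Finsupp.finsetSum_apply,
    Finset.sum_eq_single m]
  · simp
  · intro j _ hj
    rw [Finsupp.single_eq_of_ne' (by omega)]
  · intro h
    rw [Finsupp.notMem_support_iff.1 h]
    simp [act_zero' act hadd]

/-- leading coefficients in degree `n` -/
def leadSub {B : Type*} [AddCommGroup B] (C : AddSubgroup (ℕ →₀ B)) (n : ℕ) : AddSubgroup B where
  carrier := {b | ∃ p ∈ C, (∀ m, n < m → p m = 0) ∧ p n = b}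
  zero_mem' := ⟨0, C.zero_mem, by simp, by simp⟩
  add_mem' := by
    rintro _ _ ⟨p, hp, hp', rfl⟩ ⟨q, hq, hq', rfl⟩
    exact ⟨p + q, C.add_mem hp hq, fun m hm => by simp [hp' m hm, hq' m hm], by simp⟩
  neg_mem' := by
    rintro _ ⟨p, hp, hp', rfl⟩
    exact ⟨-p, C.neg_mem hp, fun m hm => by simp [hp' m hm], by simp⟩

theorem leadSub_shift {A B : Type*} [Zero A] [AddCommGroup B] (act : A → B → B)
    (hadd : ∀ (a : A) (b₁ b₂ : B), act a (b₁ + b₂) = act a b₁ + act a b₂)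
    (hε : ∀ b : B, act (0 : A) b = 0) (C : AddSubgroup (ℕ →₀ B))
    (hC : IsStableAdd (pAct act) C) (i n : ℕ) (a : A) (b : B) (hb : b ∈ leadSub C n) :
    act a b ∈ leadSub C (i + n) := by
  obtain ⟨p, hp, hp', rfl⟩ := hb
  refine ⟨pAct act (Finsupp.single i a) p, hC _ _ hp, fun m hm => ?_,
    pAct_single_apply act hadd hε _ _ _ _⟩
  obtain ⟨k, rfl⟩ := Nat.exists_eq_add_of_le (show i ≤ m by omega)
  rw [pAct_single_apply act hadd hε, hp' k (by omega), act_zero' act hadd]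

theorem leadSub_stable {A B : Type*} [Zero A] [AddCommGroup B] (act : A → B → B)
    (hadd : ∀ (a : A) (b₁ b₂ : B), act a (b₁ + b₂) = act a b₁ + act a b₂)
    (hε : ∀ b : B, act (0 : A) b = 0) (C : AddSubgroup (ℕ →₀ B))
    (hC : IsStableAdd (pAct act) C) (n : ℕ) : IsStableAdd act (leadSub C n) := by
  intro a b hb
  have := leadSub_shift act hadd hε C hC 0 n a b hb
  rwa [zero_add] at this

theorem leadSub_mono_deg {A B : Type*} [Zero A] [AddCommGroup B] (act : A → B → B)
    (hadd : ∀ (a : A) (b₁ b₂ : B), act a (b₁ + b₂) = act a b₁ + act a b₂)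
    (hε : ∀ b : B, act (0 : A) b = 0) (hs : ∀ b : B, b ∈ bracketAdd act {b})
    (C : AddSubgroup (ℕ →₀ B))
    (hC : IsStableAdd (pAct act) C) : Monotone (leadSub C) := by
  refine monotone_nat_of_le_succ fun n b hb => ?_
  have h1 : ∀ k, opSet act {b} k ⊆ (leadSub C n : Set B) := by
    intro k
    induction k with
    | zero => intro x hx; rw [show x = b from hx]; exact hb
    | succ k ih =>
      rintro x ⟨a, s, hs, rfl⟩
      exact leadSub_stable act hadd hε C hC n a s (ih hs)
  have h2 : bracketAdd act {b} ≤ leadSub C (n + 1) := by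
    unfold bracketAdd
    rw [AddSubgroup.closure_le]
    refine Set.iUnion_subset fun k => ?_
    rintro x ⟨a, s, hs, rfl⟩
    have := leadSub_shift act hadd hε C hC 1 n a s (h1 k hs)
    rwa [add_comm] at this
  exact h2 (hs b)

theorem leadSub_mono {B : Type*} [AddCommGroup B] {C D : AddSubgroup (ℕ →₀ B)} (h : C ≤ D)
    (n : ℕ) : leadSub C n ≤ leadSub D n := by
  rintro _ ⟨p, hp, hp', rfl⟩
  exact ⟨p, h hp, hp', rfl⟩

theorem le_of_leadSub {B : Type*} [AddCommGroup B] {C D : AddSubgroup (ℕ →₀ B)} (h : C ≤ D)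
    (hl : ∀ n, leadSub D n ≤ leadSub C n) : D ≤ C := by
  have key : ∀ n, ∀ p ∈ D, (∀ m, n ≤ m → p m = 0) → p ∈ C := by
    intro n
    induction n with
    | zero =>
      intro p _ h0
      have : p = 0 := by ext m; simpa using h0 m (Nat.zero_le _)
      rw [this]; exact C.zero_mem
    | succ n ih =>
      intro p hp h0
      obtain ⟨q, hq, hq', hqn⟩ := hl n ⟨p, hp, fun m hm => h0 m hm, rfl⟩
      have := ih (p - q) (D.sub_mem hp (h hq)) (fun m hm => by
        rcases hm.eq_or_lt with rfl | hm
        · simp [hqn]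
        · simp [h0 m hm, hq' m hm])
      simpa using C.add_mem this hq
  intro p hp
  refine key (p.support.sup id + 1) p hp fun m hm => ?_
  by_contra hne
  have : id m ≤ p.support.sup id := Finset.le_sup (Finsupp.mem_support_iff.2 hne)
  simp only [id] at this
  omega

theorem backward {A B : Type*} [Zero A] [AddCommGroup B] (act : A → B → B)
    (hadd : ∀ (a : A) (b₁ b₂ : B), act a (b₁ + b₂) = act a b₁ + act a b₂)
    (hε : ∀ b : B, act (0 : A) b = 0) (hN : StablyNoetherianAdd act)
    (hs : ∀ b : B, b ∈ bracketAdd act {b}) : StablyNoetherianAdd (pAct act) := by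
  intro f hf hmono
  have hst := fun k n => leadSub_stable act hadd hε (f k) (hf k) n
  have hdeg := fun k => leadSub_mono_deg act hadd hε hs (f k) (hf k)
  obtain ⟨N, hNN⟩ := hN (fun n => leadSub (f n) n) (fun n => hst n n)
    (fun m n hmn => (leadSub_mono (hmono hmn) m).trans (hdeg n hmn))
  choose K hK using fun n => hN (fun k => leadSub (f k) n) (fun k => hst k n)
    (fun _ _ h => leadSub_mono (hmono h) n)
  refine ⟨max N ((Finset.range N).sup K), fun k hk => ?_⟩
  set M := max N ((Finset.range N).sup K) with hM
  refine le_antisymm (le_of_leadSub (hmono hk) fun n => ?_) (hmono hk)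
  by_cases hn : n < N
  · have h1 : K n ≤ M := (Finset.le_sup (Finset.mem_range.2 hn)).trans (le_max_right _ _)
    exact ((hK n k (h1.trans hk)).trans (hK n M h1).symm).le
  · push Not at hn
    have hNM : N ≤ M := le_max_left _ _
    calc leadSub (f k) n ≤ leadSub (f (max k n)) (max k n) :=
          (leadSub_mono (hmono (le_max_left _ _)) n).trans (hdeg _ (le_max_right _ _))
      _ = leadSub (f N) N := hNN _ (hn.trans (le_max_right _ _))
      _ ≤ leadSub (f M) n := (leadSub_mono (hmono hNM) N).trans (hdeg _ hn)

theorem forward1 {A B : Type*} [Zero A] [AddCommGroup B] (act : A → B → B)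
    (h : StablyNoetherianAdd (pAct act)) : StablyNoetherianAdd act := by
  intro f hf hmono
  obtain ⟨N, hN⟩ := h (fun k => polySub fun _ => f k)
    (fun k => polySub_stable act _ fun _ _ a b hb => hf k a b hb)
    (fun _ _ h p hp i => hmono h (hp i))
  refine ⟨N, fun n hn => ?_⟩
  ext b
  have := hN n hn
  rw [← single_mem_polySub (fun _ => f n) 0 b, ← single_mem_polySub (fun _ => f N) 0 b]
  rw [this]

theorem bracket_stable {A B : Type*} [AddCommGroup B] (act : A → B → B)
    (hadd : ∀ (a : A) (b₁ b₂ : B), act a (b₁ + b₂) = act a b₁ + act a b₂) (b : B)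
    (a : A) (c : B) (hc : c ∈ AddSubgroup.closure (⋃ n : ℕ, opSet act {b} n)) :
    act a c ∈ bracketAdd act {b} := by
  induction hc using AddSubgroup.closure_induction with
  | mem x hx =>
    obtain ⟨n, hn⟩ := Set.mem_iUnion.1 hx
    exact AddSubgroup.subset_closure (Set.mem_iUnion.2 ⟨n, a, x, hn, rfl⟩)
  | zero => rw [act_zero' act hadd]; exact AddSubgroup.zero_mem _
  | add x y _ _ hx hy => rw [hadd]; exact AddSubgroup.add_mem _ hx hy
  | neg x _ hx => rw [act_neg' act hadd]; exact AddSubgroup.neg_mem _ hx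

theorem forward2 {A B : Type*} [Zero A] [AddCommGroup B] (act : A → B → B)
    (hadd : ∀ (a : A) (b₁ b₂ : B), act a (b₁ + b₂) = act a b₁ + act a b₂)
    (h : StablyNoetherianAdd (pAct act)) (b : B) : b ∈ bracketAdd act {b} := by
  set T := bracketAdd act {b} with hT
  set S := AddSubgroup.closure (⋃ n : ℕ, opSet act {b} n) with hS
  have hTS : T ≤ S := AddSubgroup.closure_mono
    (Set.iUnion_subset fun n => Set.subset_iUnion (opSet act {b}) (n + 1))
  have hbS : b ∈ S := AddSubgroup.subset_closure (Set.mem_iUnion.2 ⟨0, rfl⟩)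
  have hG1 : ∀ k i : ℕ, T ≤ (if i ≤ k then S else T) := by
    intro k i; split_ifs; exacts [hTS, le_rfl]
  have hG2 : ∀ k i : ℕ, (if i ≤ k then S else T) ≤ S := by
    intro k i; split_ifs; exacts [le_rfl, hTS]
  obtain ⟨N, hN⟩ := h (fun k => polySub fun i => if i ≤ k then S else T)
    (fun k => polySub_stable act _ fun i j a c hc =>
      hG1 _ _ (bracket_stable act hadd b a c (hG2 _ _ hc)))
    (fun m n hmn p hp i => by
      have := hp i
      by_cases hi : i ≤ m
      · simp only [hi, hi.trans hmn, if_true] at this ⊢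
        exact this
      · simp only [hi, if_false] at this
        exact hG1 _ _ this)
  have h1 := hN (N + 1) (Nat.le_succ N)
  have h2 : Finsupp.single (N + 1) b ∈ polySub fun i => if i ≤ N + 1 then S else T := by
    rw [single_mem_polySub]; simpa using hbS
  rw [h1, single_mem_polySub] at h2
  simpa using h2

/-- Let `B` be an abelian group with operators in a set `A` with
zero element (acting as `0`), and consider the polynomial group
`B[x] = B[x; id, 0]` as a group with operators in `A[x]` via
`(∑ aᵢ xⁱ)(∑ bⱼ xʲ) = ∑ (aᵢ bⱼ) x^{i+j}`.  Then `B[x]` is stably Noetherian if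
and only if `B` is stably Noetherian and the action of `A` on `B` is weakly
s-unital. -/
theorem stmt15 {A B : Type*} [Zero A] [AddCommGroup B] (act : A → B → B)
    (hadd : ∀ (a : A) (b₁ b₂ : B), act a (b₁ + b₂) = act a b₁ + act a b₂)
    (hε : ∀ b : B, act (0 : A) b = 0) :
    StablyNoetherianAdd (fun (α : ℕ →₀ A) (β : ℕ →₀ B) =>
        α.sum fun i a => β.sum fun j b => Finsupp.single (i + j) (act a b)) ↔
      (StablyNoetherianAdd act ∧ ∀ b : B, b ∈ bracketAdd act {b}) := by
  exact ⟨fun h => ⟨forward1 act h, forward2 act hadd h⟩, fun h => backward act hadd hε h.1 h.2⟩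
end

section
/- Let R be a left distributive ring with 0r = 0 for all r ∈ R, and let M be a left distributive left R-module with 0m = 0 for all m ∈ M. Consider M[x] as a left R[x]-module via (∑_i r_i x^i)(∑_j m_j x^j) := ∑_{i,j} (r_i m_j) x^{i+j}. Then M[x] is Noetherian as a left R[x]-module if and only if M is Noetherian and weakly s-unital. -/
section helpers
variable {R M : Type*} [AddCommGroup R] [AddCommGroup M]

/-- The action of polynomials. -/
noncomputable def pact (smul : R → M → M) : (ℕ →₀ R) → (ℕ →₀ M) → (ℕ →₀ M) :=
  fun (α : ℕ →₀ R) (μ : ℕ →₀ M) =>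
        α.sum fun i r => μ.sum fun j m => Finsupp.single (i + j) (smul r m)

/-- Polynomials with `n`-th coefficient in `S n`. -/
def famSub (S : ℕ → AddSubgroup M) : AddSubgroup (ℕ →₀ M) where
  carrier := {μ | ∀ n, μ n ∈ S n}
  zero_mem' := fun n => (S n).zero_mem
  add_mem' := fun ha hb n => (S n).add_mem (ha n) (hb n)
  neg_mem' := fun ha n => (S n).neg_mem (ha n)

lemma mem_famSub {S : ℕ → AddSubgroup M} {μ : ℕ →₀ M} :
    μ ∈ famSub S ↔ ∀ n, μ n ∈ S n := Iff.rfl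

lemma single_mem_famSub {S : ℕ → AddSubgroup M} {n : ℕ} {m : M} :
    Finsupp.single n m ∈ famSub S ↔ m ∈ S n := by
  constructor
  · intro h
    simpa using h n
  · intro h k
    rw [Finsupp.single_apply]
    split_ifs with hk
    · exact hk ▸ h
    · exact (S k).zero_mem

lemma famSub_stable (smul : R → M → M) (S : ℕ → AddSubgroup M)
    (h : ∀ i j r, ∀ m ∈ S j, smul r m ∈ S (i + j)) :
    IsStableAdd (pact smul) (famSub S) := by
  intro α μ hμ
  refine AddSubgroup.sum_mem _ fun i _ => AddSubgroup.sum_mem _ fun j _ => ?_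
  exact single_mem_famSub.2 (h _ _ _ _ (hμ j))

lemma smul_zero_aux (smul : R → M → M)
    (hl : ∀ (r : R) (m n : M), smul r (m + n) = smul r m + smul r n) (r : R) :
    smul r 0 = 0 := by
  have := hl r 0 0
  simpa using this

lemma pact_single_apply (smul : R → M → M)
    (hl : ∀ (r : R) (m n : M), smul r (m + n) = smul r m + smul r n)
    (h0 : ∀ m : M, smul 0 m = 0) (i k : ℕ) (r : R) (μ : ℕ →₀ M) :
    pact smul (Finsupp.single i r) μ (i + k) = smul r (μ k) := by
  unfold pact
  rw [Finsupp.sum_single_index (by simp [h0])]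
  rw [Finsupp.sum_apply, Finsupp.sum, Finset.sum_eq_single k]
  · simp
  · intro b _ hb
    rw [Finsupp.single_apply, if_neg (by omega)]
  · intro hk
    simp [Finsupp.notMem_support_iff.1 hk, smul_zero_aux smul hl]

/-- Left multiplication as a hom. -/
def lhom (smul : R → M → M)
    (hl : ∀ (r : R) (m n : M), smul r (m + n) = smul r m + smul r n) (r : R) : M →+ M :=
  AddMonoidHom.mk' (smul r) (hl r)

lemma bracket_stable_s18 (smul : R → M → M)
    (hl : ∀ (r : R) (m n : M), smul r (m + n) = smul r m + smul r n) (m : M) :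
    IsStableAdd smul (bracketAdd smul {m}) := by
  intro r b hb
  have : bracketAdd smul {m} ≤ (bracketAdd smul {m}).comap (lhom smul hl r) := by
    unfold bracketAdd
    rw [AddSubgroup.closure_le]
    intro y hy
    obtain ⟨n, hn⟩ := Set.mem_iUnion.1 hy
    exact AddSubgroup.subset_closure (Set.mem_iUnion.2 ⟨n + 1, r, y, hn, rfl⟩)
  exact this hb

lemma fwd (smul : R → M → M)
    (hl : ∀ (r : R) (m n : M), smul r (m + n) = smul r m + smul r n)
    (H : StablyNoetherianAdd (pact smul)) :
    StablyNoetherianAdd smul ∧ ∀ m : M, m ∈ bracketAdd smul {m} := by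
  constructor
  · intro f hf hm
    obtain ⟨N, hN⟩ := H (fun k => famSub fun _ => f k)
      (fun k => famSub_stable smul _ fun i j r m h => hf k r m h)
      (fun a b hab μ hμ n => hm hab (hμ n))
    refine ⟨N, fun n hn => ?_⟩
    ext m
    have h := hN n hn
    have h2 : Finsupp.single 0 m ∈ famSub (fun _ => f n) ↔
        Finsupp.single 0 m ∈ famSub (fun _ => f N) := by
      rw [h]
    simpa only [single_mem_famSub] using h2
  · intro m
    set B := bracketAdd smul {m} with hB
    have hBs : IsStableAdd smul B := bracket_stable_s18 smul hl m
    let C : AddSubgroup M := ⨅ r, B.comap (lhom smul hl r)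
    have hC : ∀ y, y ∈ C ↔ ∀ r, smul r y ∈ B := by
      intro y
      simp only [C, AddSubgroup.mem_iInf]
      rfl
    have hBC : B ≤ C := fun y hy => (hC y).2 fun r => hBs r y hy
    have hmC : m ∈ C := (hC m).2 fun r =>
      AddSubgroup.subset_closure (Set.mem_iUnion.2 ⟨0, r, m, rfl, rfl⟩)
    let S : ℕ → ℕ → AddSubgroup M := fun k j => if j ≤ k then C else B
    have hSC : ∀ k j, S k j ≤ C := by
      intro k j
      simp only [S]
      split_ifs
      · exact le_rfl
      · exact hBC
    have hBS : ∀ k j, B ≤ S k j := by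
      intro k j
      simp only [S]
      split_ifs
      · exact hBC
      · exact le_rfl
    obtain ⟨N, hN⟩ := H (fun k => famSub (S k))
      (fun k => famSub_stable smul _ fun i j r m h => hBS _ _ ((hC m).1 (hSC _ _ h) r))
      (by
        intro a b hab μ hμ n
        have := hμ n
        by_cases hn : n ≤ b
        · have h2 : S b n = C := if_pos hn
          rw [h2]
          exact hSC _ _ this
        · have h2 : S a n = B := if_neg (by omega)
          rw [h2] at this
          exact hBS _ _ this)
    have h := hN (N + 1) (by omega)
    have h1 : Finsupp.single (N + 1) m ∈ famSub (S (N + 1)) := by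
      rw [single_mem_famSub]
      simpa [S] using hmC
    rw [h, single_mem_famSub] at h1
    simpa [S] using h1

/-- Leading coefficients of polynomials of degree at most `n` in `P`. -/
def leadC (P : AddSubgroup (ℕ →₀ M)) (n : ℕ) : AddSubgroup M where
  carrier := {m | ∃ μ ∈ P, (∀ j, n < j → μ j = 0) ∧ μ n = m}
  zero_mem' := ⟨0, P.zero_mem, by simp, by simp⟩
  add_mem' := by
    rintro _ _ ⟨a, ha, ha', rfl⟩ ⟨b, hb, hb', rfl⟩
    exact ⟨a + b, P.add_mem ha hb, fun j hj => by simp [ha' j hj, hb' j hj], by simp⟩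
  neg_mem' := by
    rintro _ ⟨a, ha, ha', rfl⟩
    exact ⟨-a, P.neg_mem ha, fun j hj => by simp [ha' j hj], by simp⟩

lemma mem_leadC {P : AddSubgroup (ℕ →₀ M)} {n : ℕ} {m : M} :
    m ∈ leadC P n ↔ ∃ μ ∈ P, (∀ j, n < j → μ j = 0) ∧ μ n = m := Iff.rfl

lemma leadC_shift (smul : R → M → M)
    (hl : ∀ (r : R) (m n : M), smul r (m + n) = smul r m + smul r n)
    (h0 : ∀ m : M, smul 0 m = 0) (P : AddSubgroup (ℕ →₀ M)) (hP : IsStableAdd (pact smul) P)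
    (i n : ℕ) (r : R) (m : M) (hm : m ∈ leadC P n) : smul r m ∈ leadC P (i + n) := by
  obtain ⟨μ, hμ, hd, rfl⟩ := hm
  refine ⟨_, hP (Finsupp.single i r) μ hμ, ?_, pact_single_apply smul hl h0 i n r μ⟩
  intro j hj
  obtain ⟨k, rfl⟩ : ∃ k, j = i + k := ⟨j - i, by omega⟩
  rw [pact_single_apply smul hl h0, hd k (by omega), smul_zero_aux smul hl]

lemma leadC_mono_left {P Q : AddSubgroup (ℕ →₀ M)} (h : P ≤ Q) (n : ℕ) :
    leadC P n ≤ leadC Q n := by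
  rintro _ ⟨μ, hμ, hd, rfl⟩
  exact ⟨μ, h hμ, hd, rfl⟩

lemma leadC_mono (smul : R → M → M)
    (hl : ∀ (r : R) (m n : M), smul r (m + n) = smul r m + smul r n)
    (h0 : ∀ m : M, smul 0 m = 0) (hs : ∀ m : M, m ∈ bracketAdd smul {m})
    (P : AddSubgroup (ℕ →₀ M)) (hP : IsStableAdd (pact smul) P) :
    Monotone (leadC P) := by
  refine monotone_nat_of_le_succ fun n m hm => ?_
  have key : ∀ k, ∀ y ∈ opSet smul {m} k, y ∈ leadC P n := by
    intro k
    induction k with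
    | zero => rintro y rfl; exact hm
    | succ k ih =>
      rintro _ ⟨r, s, hs, rfl⟩
      simpa using leadC_shift smul hl h0 P hP 0 n r s (ih s hs)
  have : bracketAdd smul {m} ≤ leadC P (n + 1) := by
    unfold bracketAdd
    rw [AddSubgroup.closure_le]
    intro y hy
    obtain ⟨k, r, s, hs, rfl⟩ := Set.mem_iUnion.1 hy
    rw [add_comm n 1]
    exact leadC_shift smul hl h0 P hP 1 n r s (key k s hs)
  exact this (hs m)

lemma le_of_leadC {P Q : AddSubgroup (ℕ →₀ M)} (hPQ : P ≤ Q)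
    (h : ∀ n, leadC Q n ≤ leadC P n) : Q ≤ P := by
  have key : ∀ n, ∀ μ ∈ Q, (∀ j, n ≤ j → μ j = 0) → μ ∈ P := by
    intro n
    induction n with
    | zero =>
      intro μ _ hd
      have : μ = 0 := Finsupp.ext fun j => hd j (by omega)
      rw [this]
      exact P.zero_mem
    | succ n ih =>
      intro μ hμ hd
      obtain ⟨ν, hν, hνd, hνn⟩ := h n ⟨μ, hμ, fun j hj => hd j hj, rfl⟩
      have h1 : μ - ν ∈ P := by
        refine ih _ (Q.sub_mem hμ (hPQ hν)) fun j hj => ?_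
        rw [Finsupp.sub_apply]
        rcases hj.eq_or_lt with rfl | hj
        · rw [hνn, sub_self]
        · rw [hνd j hj, hd j hj, sub_self]
      simpa using P.add_mem h1 hν
  intro μ hμ
  refine key (μ.support.sup id + 1) μ hμ fun j hj => ?_
  by_contra hne
  have : j ≤ μ.support.sup id :=
    Finset.le_sup (f := id) (Finsupp.mem_support_iff.2 hne)
  omega

lemma bwd (smul : R → M → M)
    (hl : ∀ (r : R) (m n : M), smul r (m + n) = smul r m + smul r n)
    (h0 : ∀ m : M, smul 0 m = 0) (hs : ∀ m : M, m ∈ bracketAdd smul {m})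
    (hN : StablyNoetherianAdd smul) : StablyNoetherianAdd (pact smul) := by
  intro f hf hm
  have hst : ∀ k n, IsStableAdd smul (leadC (f k) n) := by
    intro k n r m h
    simpa using leadC_shift smul hl h0 _ (hf k) 0 n r m h
  have hmono : ∀ {k k' n n'}, k ≤ k' → n ≤ n' → leadC (f k) n ≤ leadC (f k') n' :=
    fun hk hn => (leadC_mono_left (hm hk) _).trans (leadC_mono smul hl h0 hs _ (hf _) hn)
  obtain ⟨D, hD⟩ := hN (fun k => leadC (f k) k) (fun k => hst k k) (fun a b h => hmono h h)
  have h2 : ∀ n, ∃ K, ∀ k, K ≤ k → leadC (f k) n = leadC (f K) n := fun n =>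
    hN (fun k => leadC (f k) n) (fun k => hst k n) (fun a b h => hmono h le_rfl)
  choose K hK using h2
  let N := max D ((Finset.range D).sup K)
  refine ⟨N, fun k hk => ?_⟩
  refine le_antisymm (le_of_leadC (hm hk) fun n => ?_) (hm hk)
  by_cases hn : n < D
  · have h1 : K n ≤ N := le_max_of_le_right (Finset.le_sup (Finset.mem_range.2 hn))
    rw [hK n k (h1.trans hk), hK n N h1]
  · have h1 : leadC (f k) n ≤ leadC (f (max k n)) (max k n) :=
      hmono (le_max_left _ _) (le_max_right _ _)
    have h2 := hD (max k n) (by omega)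
    rw [h2] at h1
    exact h1.trans (hmono (le_max_left _ _) (by omega))

end helpers

/-- Let `R` be a left distributive ring (with `0r = 0`) and `M` a
left distributive left `R`-module (with `0m = 0`).  Consider `M[x]` as a left
`R[x]`-module via `(∑ rᵢ xⁱ)(∑ mⱼ xʲ) = ∑ (rᵢ mⱼ) x^{i+j}`.  Then `M[x]` is
Noetherian as a left `R[x]`-module if and only if `M` is Noetherian and weakly
s-unital (every `m ∈ M` lies in the additive subgroup generated by the iterated
products `r₁(r₂(⋯(rₙ m)⋯))`, `n ≥ 1`).
Noetherianity is expressed via `StablyNoetherianAdd`, whose stable subgroups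
are exactly the submodules, and weak s-unitality via `bracketAdd`. -/
theorem stmt18 {R M : Type*} [AddCommGroup R] [AddCommGroup M]
    (mul : R → R → R) (smul : R → M → M)
    (hmul_ld : ∀ r s t : R, mul r (s + t) = mul r s + mul r t)
    (h0r : ∀ r : R, mul 0 r = 0)
    (hsmul_ld : ∀ (r : R) (m n : M), smul r (m + n) = smul r m + smul r n)
    (h0m : ∀ m : M, smul 0 m = 0) :
    StablyNoetherianAdd (fun (α : ℕ →₀ R) (μ : ℕ →₀ M) =>
        α.sum fun i r => μ.sum fun j m => Finsupp.single (i + j) (smul r m)) ↔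
      (StablyNoetherianAdd smul ∧ ∀ m : M, m ∈ bracketAdd smul {m}) := by
  exact ⟨fun H => fwd smul hsmul_ld H, fun H => bwd smul hsmul_ld h0m H.2 H.1⟩
end

section
/- Let R be a left distributive ring with 0r = 0 for all r ∈ R, and consider R[x] as a left module over itself via (∑_i r_i x^i)(∑_j s_j x^j) := ∑_{i,j} (r_i s_j) x^{i+j}. Then R[x] is left Noetherian if and only if R is left Noetherian and weakly left s-unital. In particular, if R is unital (there exists e ∈ R with er = r for all r ∈ R), then R[x] is left Noetherian if and only if R is left Noetherian. -/
section Helpers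

variable {R : Type*} [AddCommGroup R]

/-- The polynomial multiplication. -/
noncomputable def polyAct (mul : R → R → R) (α β : ℕ →₀ R) : ℕ →₀ R :=
  α.sum fun i r => β.sum fun j s => Finsupp.single (i + j) (mul r s)

/-- Left multiplication as an additive endomorphism. -/
def lmulEnd (mul : R → R → R) (hld : ∀ r s t : R, mul r (s + t) = mul r s + mul r t) (r : R) :
    AddMonoid.End R := AddMonoidHom.mk' (mul r) (hld r)

/-- The nonunital ring generated by left multiplications. -/
def lmulRing (mul : R → R → R) (hld : ∀ r s t : R, mul r (s + t) = mul r s + mul r t) :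
    NonUnitalSubring (AddMonoid.End R) := NonUnitalSubring.closure (Set.range (lmulEnd mul hld))

/-- Apply an endomorphism to coefficients. then shift by `m`. -/
noncomputable def shiftOp (a : AddMonoid.End R) (m : ℕ) : (ℕ →₀ R) →+ (ℕ →₀ R) :=
  (Finsupp.mapDomain.addMonoidHom (fun j => m + j)).comp (Finsupp.mapRange.addMonoidHom a)

lemma shiftOp_single (a : AddMonoid.End R) (m j : ℕ) (r : R) :
    shiftOp a m (Finsupp.single j r) = Finsupp.single (m + j) (a r) := by
  change Finsupp.mapDomain (fun j => m + j) (Finsupp.mapRange a (map_zero a) _) = _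
  rw [Finsupp.mapRange_single, Finsupp.mapDomain_single]

lemma shiftOp_eq_sum (a : AddMonoid.End R) (m : ℕ) (p : ℕ →₀ R) :
    shiftOp a m p = p.sum fun j s => Finsupp.single (m + j) (a s) := by
  conv_lhs => rw [← Finsupp.sum_single p]
  rw [Finsupp.sum, map_sum, Finsupp.sum]
  exact Finset.sum_congr rfl fun j _ => shiftOp_single a m j _

lemma shiftOp_apply_add (a : AddMonoid.End R) (m j : ℕ) (p : ℕ →₀ R) :
    shiftOp a m p (m + j) = a (p j) := by
  change Finsupp.mapDomain (fun j => m + j) (Finsupp.mapRange a (map_zero a) _) _ = _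
  rw [Finsupp.mapDomain_apply (add_right_injective m)]
  rfl

lemma polyAct_single (mul : R → R → R)
    (hld : ∀ r s t : R, mul r (s + t) = mul r s + mul r t)
    (h0r : ∀ r : R, mul 0 r = 0) (m : ℕ) (r : R) (p : ℕ →₀ R) :
    polyAct mul (Finsupp.single m r) p = shiftOp (lmulEnd mul hld r) m p := by
  rw [polyAct, Finsupp.sum_single_index, shiftOp_eq_sum]
  · rfl
  · simp [h0r]

lemma polyAct_mem (mul : R → R → R) (C : AddSubgroup R) (α β : ℕ →₀ R)
    (h : ∀ a j, mul a (β j) ∈ C) (k : ℕ) : polyAct mul α β k ∈ C := by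
  rw [polyAct, Finsupp.sum, Finsupp.finsetSum_apply]
  refine sum_mem fun i _ => ?_
  rw [Finsupp.sum, Finsupp.finsetSum_apply]
  refine sum_mem fun j _ => ?_
  rw [Finsupp.single_apply]
  split_ifs
  · exact h _ _
  · exact zero_mem _

lemma shiftOp_mem (mul : R → R → R)
    (hld : ∀ r s t : R, mul r (s + t) = mul r s + mul r t)
    (h0r : ∀ r : R, mul 0 r = 0) (I : AddSubgroup (ℕ →₀ R)) (hI : IsStableAdd (polyAct mul) I)
    (a : AddMonoid.End R) (ha : a ∈ lmulRing mul hld) :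
    ∀ m : ℕ, ∀ p ∈ I, shiftOp a m p ∈ I := by
  induction ha using NonUnitalSubring.closure_induction with
  | mem x hx =>
    obtain ⟨r, rfl⟩ := hx
    intro m p hp
    rw [← polyAct_single mul hld h0r]
    exact hI _ _ hp
  | zero =>
    intro m p hp
    have : shiftOp (0 : AddMonoid.End R) m p = 0 := by
      rw [shiftOp_eq_sum]; simp
    rw [this]; exact zero_mem _
  | add x y _ _ hx hy =>
    intro m p hp
    have : shiftOp (x + y) m p = shiftOp x m p + shiftOp y m p := by
      have e : ∀ s, (x + y) s = x s + y s := fun _ => rfl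
      simp only [shiftOp_eq_sum, e, Finsupp.single_add, Finsupp.sum_add]
    rw [this]; exact add_mem (hx m p hp) (hy m p hp)
  | neg x _ hx =>
    intro m p hp
    have : shiftOp (-x) m p = - shiftOp x m p := by
      have e : ∀ s, (-x) s = - x s := fun _ => rfl
      simp only [shiftOp_eq_sum, e, Finsupp.single_neg, Finsupp.sum_neg]
    rw [this]; exact neg_mem (hx m p hp)
  | mul x y _ _ hx hy =>
    intro m p hp
    have : shiftOp (x * y) m p = shiftOp x m (shiftOp y 0 p) := by
      rw [shiftOp_eq_sum y, Finsupp.sum, map_sum, shiftOp_eq_sum, Finsupp.sum]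
      refine Finset.sum_congr rfl fun j _ => ?_
      rw [shiftOp_single, zero_add]; rfl
    rw [this]; exact hx m _ (hy 0 p hp)

lemma exists_of_bracket (mul : R → R → R)
    (hld : ∀ r s t : R, mul r (s + t) = mul r s + mul r t) (r t : R)
    (ht : t ∈ bracketAdd mul {r}) : ∃ a ∈ lmulRing mul hld, a r = t := by
  have hop : ∀ n : ℕ, ∀ t ∈ opSet mul {r} (n + 1), ∃ a ∈ lmulRing mul hld, a r = t := by
    intro n
    induction n with
    | zero =>
      rintro t ⟨b, s, hs, rfl⟩
      obtain rfl : s = r := hs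
      exact ⟨lmulEnd mul hld b, NonUnitalSubring.subset_closure ⟨b, rfl⟩, rfl⟩
    | succ n ih =>
      rintro t ⟨b, s, hs, rfl⟩
      obtain ⟨a, ha, rfl⟩ := ih s hs
      exact ⟨lmulEnd mul hld b * a,
        mul_mem (NonUnitalSubring.subset_closure ⟨b, rfl⟩) ha, rfl⟩
  unfold bracketAdd at ht
  induction ht using AddSubgroup.closure_induction with
  | mem x hx =>
    obtain ⟨n, hn⟩ := Set.mem_iUnion.1 hx
    exact hop n x hn
  | zero => exact ⟨0, zero_mem _, rfl⟩
  | add x y _ _ hx hy =>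
    obtain ⟨a, ha, rfl⟩ := hx
    obtain ⟨b, hb, rfl⟩ := hy
    exact ⟨a + b, add_mem ha hb, rfl⟩
  | neg x _ hx =>
    obtain ⟨a, ha, rfl⟩ := hx
    exact ⟨-a, neg_mem ha, rfl⟩

lemma exists_common (mul : R → R → R)
    (hld : ∀ r s t : R, mul r (s + t) = mul r s + mul r t)
    (hs : ∀ r : R, r ∈ bracketAdd mul {r}) {ι : Type*} (s : Finset ι) (p : ι → R) :
    ∃ a ∈ lmulRing mul hld, ∀ j ∈ s, a (p j) = p j := by
  classical
  induction s using Finset.induction_on with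
  | empty => exact ⟨0, zero_mem _, by simp⟩
  | insert i s _ ih =>
    obtain ⟨a, ha, h⟩ := ih
    obtain ⟨b, hb, h'⟩ := exists_of_bracket mul hld _ _ (hs (p i - a (p i)))
    refine ⟨b + a - b * a, sub_mem (add_mem hb ha) (mul_mem hb ha), ?_⟩
    have key : ∀ t, (b + a - b * a) t = b t + a t - b (a t) := fun t => rfl
    intro j hj
    rw [key]
    rcases Finset.mem_insert.1 hj with rfl | hj
    · rw [map_sub] at h'
      rw [add_sub_right_comm, h', sub_add_cancel]
    · rw [h j hj]; abel

lemma shift_mem (mul : R → R → R)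
    (hld : ∀ r s t : R, mul r (s + t) = mul r s + mul r t)
    (h0r : ∀ r : R, mul 0 r = 0) (hs : ∀ r : R, r ∈ bracketAdd mul {r})
    (I : AddSubgroup (ℕ →₀ R)) (hI : IsStableAdd (polyAct mul) I)
    (m : ℕ) (p : ℕ →₀ R) (hp : p ∈ I) : shiftOp 1 m p ∈ I := by
  obtain ⟨a, ha, h⟩ := exists_common mul hld hs p.support p
  have : shiftOp 1 m p = shiftOp a m p := by
    rw [shiftOp_eq_sum, shiftOp_eq_sum]
    refine Finset.sum_congr rfl fun j hj => ?_
    simp only [h j hj]; rfl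
  rw [this]
  exact shiftOp_mem mul hld h0r I hI a ha m p hp

/-- Leading coefficients of elements of degree at most `d`. -/
def leadAdd (I : AddSubgroup (ℕ →₀ R)) (d : ℕ) : AddSubgroup R where
  carrier := {r | ∃ p ∈ I, (∀ j, d < j → p j = 0) ∧ p d = r}
  zero_mem' := ⟨0, zero_mem _, by simp, rfl⟩
  add_mem' := by
    rintro _ _ ⟨p, hp, h, rfl⟩ ⟨q, hq, h', rfl⟩
    exact ⟨p + q, add_mem hp hq, fun j hj => by simp [h j hj, h' j hj], rfl⟩
  neg_mem' := by
    rintro _ ⟨p, hp, h, rfl⟩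
    exact ⟨-p, neg_mem hp, fun j hj => by simp [h j hj], rfl⟩

lemma leadAdd_stable (mul : R → R → R)
    (hld : ∀ r s t : R, mul r (s + t) = mul r s + mul r t)
    (h0r : ∀ r : R, mul 0 r = 0)
    (I : AddSubgroup (ℕ →₀ R)) (hI : IsStableAdd (polyAct mul) I) (d : ℕ) :
    IsStableAdd mul (leadAdd I d) := by
  rintro a _ ⟨p, hp, h, rfl⟩
  have key : ∀ j, polyAct mul (Finsupp.single 0 a) p j = mul a (p j) := fun j => by
    rw [polyAct_single mul hld h0r]
    have := shiftOp_apply_add (lmulEnd mul hld a) 0 j p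
    rw [zero_add] at this
    exact this
  refine ⟨_, hI (Finsupp.single 0 a) p hp, fun j hj => ?_, key d⟩
  rw [key, h j hj]
  exact map_zero (lmulEnd mul hld a)

lemma leadAdd_mono_left {I J : AddSubgroup (ℕ →₀ R)} (h : I ≤ J) (d : ℕ) :
    leadAdd I d ≤ leadAdd J d := by
  rintro _ ⟨p, hp, h', rfl⟩
  exact ⟨p, h hp, h', rfl⟩

lemma leadAdd_mono_right (mul : R → R → R)
    (hld : ∀ r s t : R, mul r (s + t) = mul r s + mul r t)
    (h0r : ∀ r : R, mul 0 r = 0) (hs : ∀ r : R, r ∈ bracketAdd mul {r})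
    (I : AddSubgroup (ℕ →₀ R)) (hI : IsStableAdd (polyAct mul) I) {d e : ℕ} (hde : d ≤ e) :
    leadAdd I d ≤ leadAdd I e := by
  rintro _ ⟨p, hp, h, rfl⟩
  obtain ⟨m, rfl⟩ := Nat.exists_eq_add_of_le' hde
  refine ⟨_, shift_mem mul hld h0r hs I hI m p hp, fun j hj => ?_, ?_⟩
  · obtain ⟨k, rfl⟩ := Nat.exists_eq_add_of_le (show m ≤ j by omega)
    rw [shiftOp_apply_add, h k (by omega)]; exact map_zero _
  · rw [shiftOp_apply_add]; rfl

lemma eq_of_leadAdd {I J : AddSubgroup (ℕ →₀ R)} (h : I ≤ J)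
    (hl : ∀ d, leadAdd J d ≤ leadAdd I d) : J = I := by
  refine le_antisymm ?_ h
  have key : ∀ d : ℕ, ∀ p ∈ J, (∀ j, d ≤ j → p j = 0) → p ∈ I := by
    intro d
    induction d with
    | zero =>
      intro p _ h0
      have : p = 0 := Finsupp.ext fun j => h0 j (Nat.zero_le _)
      rw [this]; exact zero_mem _
    | succ d ih =>
      intro p hp h0
      obtain ⟨q, hq, hq0, hqd⟩ := hl d ⟨p, hp, fun j hj => h0 j hj, rfl⟩
      have := ih (p - q) (sub_mem hp (h hq)) (fun j hj => by
        rcases hj.eq_or_lt with rfl | hj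
        · simp [hqd]
        · simp [h0 j hj, hq0 j hj])
      simpa using add_mem this hq
  intro p hp
  refine key (p.support.sup id + 1) p hp fun j hj => ?_
  by_contra hne
  have : j ≤ p.support.sup id := Finset.le_sup (f := id) (Finsupp.mem_support_iff.2 hne)
  omega

lemma hilbert (mul : R → R → R)
    (hld : ∀ r s t : R, mul r (s + t) = mul r s + mul r t)
    (h0r : ∀ r : R, mul 0 r = 0) (hN : StablyNoetherianAdd mul)
    (hs : ∀ r : R, r ∈ bracketAdd mul {r}) : StablyNoetherianAdd (polyAct mul) := by
  intro f hf hm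
  have hst := fun n d => leadAdd_stable mul hld h0r (f n) (hf n) d
  have hmono : ∀ {n n' d d' : ℕ}, n ≤ n' → d ≤ d' → leadAdd (f n) d ≤ leadAdd (f n') d' :=
    fun h h' => (leadAdd_mono_left (hm h) _).trans
      (leadAdd_mono_right mul hld h0r hs _ (hf _) h')
  obtain ⟨N, hNN⟩ := hN (fun k => leadAdd (f k) k) (fun k => hst k k) (fun _ _ h => hmono h h)
  choose g hg using fun d => hN (fun n => leadAdd (f n) d) (fun n => hst n d)
    (fun _ _ h => hmono h le_rfl)
  refine ⟨max N ((Finset.range N).sup g), fun n hn => eq_of_leadAdd (hm hn) fun d => ?_⟩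
  set M := max N ((Finset.range N).sup g) with hM
  have hNM : N ≤ M := le_max_left _ _
  by_cases hd : d < N
  · have hgd : g d ≤ M := (Finset.le_sup (f := g) (Finset.mem_range.2 hd)).trans (le_max_right _ _)
    exact ((hg d n (hgd.trans hn)).trans (hg d M hgd).symm).le
  · calc leadAdd (f n) d ≤ leadAdd (f (max n d)) (max n d) :=
          hmono (le_max_left _ _) (le_max_right _ _)
      _ = leadAdd (f N) N := hNN _ ((hNM.trans hn).trans (le_max_left _ _))
      _ ≤ leadAdd (f M) d := hmono hNM (not_lt.1 hd)

/-- Polynomials with the `j`-th coefficient in `C j`. -/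
def coeffSub (C : ℕ → AddSubgroup R) : AddSubgroup (ℕ →₀ R) where
  carrier := {p | ∀ j, p j ∈ C j}
  zero_mem' := fun j => zero_mem _
  add_mem' := fun hp hq j => add_mem (hp j) (hq j)
  neg_mem' := fun hp j => neg_mem (hp j)

lemma noeth_of_poly (mul : R → R → R) (h : StablyNoetherianAdd (polyAct mul)) :
    StablyNoetherianAdd mul := by
  intro f hf hm
  obtain ⟨N, hN⟩ := h (fun n => coeffSub fun _ => f n)
    (fun n α β hβ k => polyAct_mem mul (f n) α β (fun a j => hf n a _ (hβ j)) k)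
    (fun _ _ h p hp j => hm h (hp j))
  refine ⟨N, fun n hn => le_antisymm (fun r hr => ?_) (hm hn)⟩
  have : Finsupp.single 0 r ∈ coeffSub fun _ => f N := by
    have h2 := hN n hn
    rw [← h2]
    intro j
    rw [Finsupp.single_apply]
    split_ifs
    · exact hr
    · exact zero_mem _
  simpa using this 0

lemma bracket_stable_s19 (mul : R → R → R)
    (hld : ∀ r s t : R, mul r (s + t) = mul r s + mul r t) (S : Set R) :
    IsStableAdd mul (bracketAdd mul S) := by
  intro a b hb
  have : bracketAdd mul S ≤ (bracketAdd mul S).comap (lmulEnd mul hld a) := by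
    conv_lhs => rw [bracketAdd]
    rw [AddSubgroup.closure_le]
    intro x hx
    obtain ⟨n, hn⟩ := Set.mem_iUnion.1 hx
    exact AddSubgroup.subset_closure (Set.mem_iUnion.2 ⟨n + 1, a, x, hn, rfl⟩)
  exact this hb

lemma sunital_of_poly (mul : R → R → R)
    (hld : ∀ r s t : R, mul r (s + t) = mul r s + mul r t)
    (h : StablyNoetherianAdd (polyAct mul)) (r : R) : r ∈ bracketAdd mul {r} := by
  set B := bracketAdd mul {r} with hB
  set D := AddSubgroup.zmultiples r ⊔ B with hD
  have hBD : B ≤ D := le_sup_right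
  have hrD : r ∈ D := (le_sup_left : _ ≤ D) (AddSubgroup.mem_zmultiples r)
  have hst : ∀ a, ∀ t ∈ D, mul a t ∈ B := by
    intro a
    have : D ≤ B.comap (lmulEnd mul hld a) := by
      refine sup_le ?_ (fun t ht => bracket_stable_s19 mul hld {r} a t ht)
      rw [AddSubgroup.zmultiples_le]
      exact AddSubgroup.subset_closure (Set.mem_iUnion.2 ⟨0, a, r, rfl, rfl⟩)
    exact fun t ht => this ht
  have hle : ∀ n j : ℕ, (if j ≤ n then D else B) ≤ D := by
    intro n j; split_ifs
    · exact le_rfl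
    · exact hBD
  have hge : ∀ n j : ℕ, B ≤ (if j ≤ n then D else B) := by
    intro n j; split_ifs
    · exact hBD
    · exact le_rfl
  obtain ⟨N, hN⟩ := h (fun n => coeffSub fun j => if j ≤ n then D else B)
    (fun n α β hβ k => hge n k
      (polyAct_mem mul B α β (fun a j => hst a _ (hle n j (hβ j))) k))
    (fun n n' h p hp j => by
      have : p j ∈ (if j ≤ n then D else B) := hp j
      change p j ∈ (if j ≤ n' then D else B)
      by_cases hj : j ≤ n
      · rw [if_pos (hj.trans h)]; exact hle _ _ this
      · rw [if_neg hj] at this; exact hge _ _ this)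
  have h2 := hN (N + 1) (Nat.le_succ N)
  have h3 : Finsupp.single (N + 1) r ∈ coeffSub fun j => if j ≤ N + 1 then D else B := by
    intro j
    change _ ∈ (if j ≤ N + 1 then D else B)
    rw [Finsupp.single_apply]
    by_cases h4 : N + 1 = j
    · rw [if_pos h4, if_pos h4.ge]; exact hrD
    · rw [if_neg h4]; exact zero_mem _
  rw [h2] at h3
  have h4 : _ ∈ (if N + 1 ≤ N then D else B) := h3 (N + 1)
  rw [if_neg (by omega), Finsupp.single_eq_same] at h4
  exact h4

end Helpers

/-- Let `R` be a left distributive ring (with `0r = 0`), and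
consider `R[x]` as a left module over itself via
`(∑ rᵢ xⁱ)(∑ sⱼ xʲ) = ∑ (rᵢ sⱼ) x^{i+j}`.  Then `R[x]` is left Noetherian if
and only if `R` is left Noetherian and weakly left s-unital.  In particular, if
`R` is unital, then `R[x]` is left Noetherian if and only if `R` is left
Noetherian.
Left Noetherianity (the ascending chain condition on left ideals, i.e. additive
subgroups closed under left multiplication) is expressed via
`StablyNoetherianAdd`, and weak left s-unitality via `bracketAdd`. -/
theorem stmt19 {R : Type*} [AddCommGroup R] (mul : R → R → R)
    (hld : ∀ r s t : R, mul r (s + t) = mul r s + mul r t)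
    (h0r : ∀ r : R, mul 0 r = 0) :
    (StablyNoetherianAdd (fun (α β : ℕ →₀ R) =>
        α.sum fun i r => β.sum fun j s => Finsupp.single (i + j) (mul r s)) ↔
      (StablyNoetherianAdd mul ∧ ∀ r : R, r ∈ bracketAdd mul {r})) ∧
    ((∃ e : R, ∀ r : R, mul e r = r) →
      (StablyNoetherianAdd (fun (α β : ℕ →₀ R) =>
          α.sum fun i r => β.sum fun j s => Finsupp.single (i + j) (mul r s)) ↔
        StablyNoetherianAdd mul)) := by
  have main : StablyNoetherianAdd (polyAct mul) ↔
      (StablyNoetherianAdd mul ∧ ∀ r : R, r ∈ bracketAdd mul {r}) :=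
    ⟨fun h => ⟨noeth_of_poly mul h, sunital_of_poly mul hld h⟩,
      fun h => hilbert mul hld h0r h.1 h.2⟩
  refine ⟨main, fun ⟨e, he⟩ => main.trans ⟨fun h => h.1, fun h => ⟨h, fun r => ?_⟩⟩⟩
  exact AddSubgroup.subset_closure (Set.mem_iUnion.2 ⟨0, e, r, rfl, (he r).symm⟩)
end
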